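/- arXiv:math/0610009 — 2 statements merged into one kernel-verified Lean document; each statement's English description precedes it below -/
import Mathlib

section
/- Gluing Lemma: let M be a precofibration category, and consider a commutative cube whose top face is a pushout of f₁₂ : A₁ → A₂ (a cofibration) along f₁₃ : A₁ → A₃, and whose bottom face is a pushout of g₁₂ : B₁ → B₂ (a cofibration) along g₁₃ : B₁ → B₃, with A₁, A₃, B₁, B₃ cofibrant, connected by vertical maps u₁ : A₁ → B₁, u₂ : A₂ → B₂, u₃ : A₃ → B₃ and the induced u₄ : A₄ → B₄. If u₁, u₂, u₃ are weak equivalences, then u₄ is a weak equivalence. -/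
open CategoryTheory CategoryTheory.Limits

universe w v u

variable (C : Type u) [Category.{v} C] [HasInitial C]

/-- An Anderson–Brown–Cisinski precofibration category structure on `C`:
classes of weak equivalences `W` and cofibrations `Cof` satisfying the axioms CF1–CF4. -/
structure PrecofCat where
  /-- the class of weak equivalences -/
  W : MorphismProperty C
  /-- the class of cofibrations -/
  Cof : MorphismProperty C
  /-- CF1: cofibrations are closed under composition -/
  cof_comp : ∀ {X Y Z : C} (f : X ⟶ Y) (g : Y ⟶ Z), Cof f → Cof g → Cof (f ≫ g)
  /-- CF1: the initial object is cofibrant -/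
  initial_cofibrant : Cof (initial.to (⊥_ C))
  /-- CF1: isomorphisms are weak equivalences -/
  iso_W : ∀ {X Y : C} (f : X ⟶ Y), IsIso f → W f
  /-- CF1: isomorphisms with cofibrant domain are cofibrations -/
  iso_cof : ∀ {X Y : C} (f : X ⟶ Y), IsIso f → Cof (initial.to X) → Cof f
  /-- CF2: two-out-of-three -/
  W_comp : ∀ {X Y Z : C} (f : X ⟶ Y) (g : Y ⟶ Z), W f → W g → W (f ≫ g)
  W_cancel_left : ∀ {X Y Z : C} (f : X ⟶ Y) (g : Y ⟶ Z), W f → W (f ≫ g) → W g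
  W_cancel_right : ∀ {X Y Z : C} (f : X ⟶ Y) (g : Y ⟶ Z), W g → W (f ≫ g) → W f
  /-- CF3: pushouts of cofibrations with cofibrant corners exist -/
  pushout_exists : ∀ {A B X : C} (i : A ⟶ B) (f : A ⟶ X), Cof i →
      Cof (initial.to A) → Cof (initial.to X) →
      ∃ (D : C) (g : B ⟶ D) (j : X ⟶ D), IsPushout i f g j
  /-- CF3: the pushout of a cofibration is a cofibration -/
  pushout_cof : ∀ {A B X D : C} (i : A ⟶ B) (f : A ⟶ X) (g : B ⟶ D) (j : X ⟶ D),
      Cof i → Cof (initial.to A) → Cof (initial.to X) → IsPushout i f g j → Cof j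
  /-- CF3: the pushout of a trivial cofibration is a trivial cofibration -/
  pushout_triv_cof : ∀ {A B X D : C} (i : A ⟶ B) (f : A ⟶ X) (g : B ⟶ D) (j : X ⟶ D),
      Cof i → W i → Cof (initial.to A) → Cof (initial.to X) → IsPushout i f g j → W j
  /-- CF4: factorization of maps with cofibrant domain -/
  factorization : ∀ {A B : C} (f : A ⟶ B), Cof (initial.to A) →
      ∃ (Z : C) (f' : A ⟶ Z) (r : Z ⟶ B), Cof f' ∧ W r ∧ f' ≫ r = f

variable {C}

/-- An object is cofibrant if the map from the initial object is a cofibration. -/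
def PrecofCat.Cofibrant (P : PrecofCat C) (A : C) : Prop :=
  P.Cof (initial.to A)

namespace PrecofCat

lemma Cofibrant.of_cof {P : PrecofCat C} {X Y : C} (hX : P.Cofibrant X) {f : X ⟶ Y}
    (hf : P.Cof f) : P.Cofibrant Y := by
  have h := P.cof_comp _ _ hX hf
  rwa [Subsingleton.elim (initial.to X ≫ f) (initial.to Y)] at h

/-- The gluing lemma for a map of spans such that `u₃` and the relative latching map
`q : X₂ ⊔_{X₁} Y₁ ⟶ Y₂` are trivial cofibrations. -/
lemma W_of_isPushout_of_trivial_cof (P : PrecofCat C)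
    {X₁ X₂ X₃ X₄ Y₁ Y₂ Y₃ Y₄ Q : C}
    {f₁₂ : X₁ ⟶ X₂} {f₁₃ : X₁ ⟶ X₃} {f₂₄ : X₂ ⟶ X₄} {f₃₄ : X₃ ⟶ X₄}
    {g₁₂ : Y₁ ⟶ Y₂} {g₁₃ : Y₁ ⟶ Y₃} {g₂₄ : Y₂ ⟶ Y₄} {g₃₄ : Y₃ ⟶ Y₄}
    {u₁ : X₁ ⟶ Y₁} {u₂ : X₂ ⟶ Y₂} {u₃ : X₃ ⟶ Y₃} {u₄ : X₄ ⟶ Y₄}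
    {i : X₂ ⟶ Q} {j : Y₁ ⟶ Q} {q : Q ⟶ Y₂}
    (htop : IsPushout f₁₂ f₁₃ f₂₄ f₃₄) (hbot : IsPushout g₁₂ g₁₃ g₂₄ g₃₄)
    (hQ : IsPushout f₁₂ u₁ i j) (hiq : i ≫ q = u₂) (hjq : j ≫ q = g₁₂)
    (hX₁ : P.Cofibrant X₁) (hX₃ : P.Cofibrant X₃) (hY₁ : P.Cofibrant Y₁)
    (hf₁₂ : P.Cof f₁₂) (hq : P.Cof q) (hqW : P.W q) (hu₃ : P.Cof u₃) (hu₃W : P.W u₃)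
    (sq₃ : u₁ ≫ g₁₃ = f₁₃ ≫ u₃)
    (sq₂₄ : u₂ ≫ g₂₄ = f₂₄ ≫ u₄) (sq₃₄ : u₃ ≫ g₃₄ = f₃₄ ≫ u₄) :
    P.W u₄ := by
  have hf₃₄ : P.Cof f₃₄ := P.pushout_cof _ _ _ _ hf₁₂ hX₁ hX₃ htop
  have hX₄ : P.Cofibrant X₄ := hX₃.of_cof hf₃₄
  have hY₃ : P.Cofibrant Y₃ := hX₃.of_cof hu₃
  have hQc : P.Cofibrant Q := hY₁.of_cof (P.pushout_cof _ _ _ _ hf₁₂ hX₁ hY₁ hQ)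
  obtain ⟨R, l, k, hR⟩ := P.pushout_exists u₃ f₃₄ hu₃ hX₃ hX₄
  have hk : P.W k := P.pushout_triv_cof _ _ _ _ hu₃ hu₃W hX₃ hX₄ hR
  have hRc : P.Cofibrant R := hX₄.of_cof (P.pushout_cof _ _ _ _ hu₃ hX₃ hX₄ hR)
  have hbig : IsPushout f₁₂ (u₁ ≫ g₁₃) (f₂₄ ≫ k) l := by
    rw [sq₃]
    exact htop.paste_vert hR.flip
  let d : Q ⟶ R := hQ.desc (f₂₄ ≫ k) (g₁₃ ≫ l) (by simpa using hbig.w)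
  have hid : i ≫ d = f₂₄ ≫ k := hQ.inl_desc _ _ _
  have hjd : j ≫ d = g₁₃ ≫ l := hQ.inr_desc _ _ _
  have hd : IsPushout j g₁₃ d l := by
    rw [← hid] at hbig
    exact hbig.of_top hjd hQ
  let e : R ⟶ Y₄ := hR.desc g₃₄ u₄ sq₃₄
  have hle : l ≫ e = g₃₄ := hR.inl_desc _ _ _
  have hke : k ≫ e = u₄ := hR.inr_desc _ _ _
  have hqe : q ≫ g₂₄ = d ≫ e := by
    apply hQ.hom_ext
    · rw [reassoc_of% hiq, reassoc_of% hid, hke, sq₂₄]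
    · rw [reassoc_of% hjq, reassoc_of% hjd, hle, hbot.w]
  have he : IsPushout q d g₂₄ e := by
    rw [← hjq, ← hle] at hbot
    exact hbot.of_left hqe hd
  rw [← hke]
  exact P.W_comp _ _ hk (P.pushout_triv_cof _ _ _ _ hq hqW hQc hRc he)

/-- Binary coproducts of cofibrant objects exist, and the inclusions are cofibrations. -/
lemma exists_coproduct (P : PrecofCat C) {A B : C} (hA : P.Cofibrant A) (hB : P.Cofibrant B) :
    ∃ (S : C) (i : A ⟶ S) (j : B ⟶ S),
      IsPushout (initial.to A) (initial.to B) i j ∧ P.Cof i ∧ P.Cof j := by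
  obtain ⟨S, i, j, h⟩ := P.pushout_exists _ (initial.to B) hA P.initial_cofibrant hB
  exact ⟨S, i, j, h, P.pushout_cof _ _ _ _ hB P.initial_cofibrant hA h.flip,
    P.pushout_cof _ _ _ _ hA P.initial_cofibrant hB h⟩

/-- A mapping cylinder of a map `u₁` can be extended along a commutative square to a mapping
cylinder of `u₃`. -/
lemma exists_cylinder_extension (P : PrecofCat C) {A₁ A₃ B₁ B₃ S Z₁ : C}
    {f : A₁ ⟶ A₃} {g : B₁ ⟶ B₃} {u₁ : A₁ ⟶ B₁} {u₃ : A₃ ⟶ B₃}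
    {i : A₁ ⟶ S} {j : B₁ ⟶ S} {c : S ⟶ Z₁} {r₁ : Z₁ ⟶ B₁}
    (hS : IsPushout (initial.to A₁) (initial.to B₁) i j) (hSc : P.Cofibrant S) (hc : P.Cof c)
    (hA₃ : P.Cofibrant A₃) (hB₃ : P.Cofibrant B₃)
    (hi : i ≫ c ≫ r₁ = u₁) (hj : j ≫ c ≫ r₁ = 𝟙 B₁) (sq : u₁ ≫ g = f ≫ u₃) :
    ∃ (Z₃ : C) (a : A₃ ⟶ Z₃) (b : B₃ ⟶ Z₃) (z : Z₁ ⟶ Z₃) (r : Z₃ ⟶ B₃),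
      P.Cof a ∧ P.Cof b ∧ P.W r ∧ a ≫ r = u₃ ∧ b ≫ r = 𝟙 B₃ ∧
      (i ≫ c) ≫ z = f ≫ a ∧ (j ≫ c) ≫ z = g ≫ b ∧ z ≫ r = r₁ ≫ g := by
  obtain ⟨T, k, l, hT, hk, hl⟩ := P.exists_coproduct hA₃ hB₃
  have hTc : P.Cofibrant T := hA₃.of_cof hk
  let t : S ⟶ T := hS.desc (f ≫ k) (g ≫ l) (Subsingleton.elim _ _)
  have hit : i ≫ t = f ≫ k := hS.inl_desc _ _ _
  have hjt : j ≫ t = g ≫ l := hS.inr_desc _ _ _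
  let v : T ⟶ B₃ := hT.desc u₃ (𝟙 B₃) (Subsingleton.elim _ _)
  have hkv : k ≫ v = u₃ := hT.inl_desc _ _ _
  have hlv : l ≫ v = 𝟙 B₃ := hT.inr_desc _ _ _
  obtain ⟨D, m, n, hD⟩ := P.pushout_exists c t hc hSc hTc
  have hn : P.Cof n := P.pushout_cof _ _ _ _ hc hSc hTc hD
  have hw : c ≫ r₁ ≫ g = t ≫ v := by
    apply hS.hom_ext
    · rw [reassoc_of% hi, reassoc_of% hit, hkv, sq]
    · rw [reassoc_of% hj, reassoc_of% hjt, hlv, Category.comp_id]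
  obtain ⟨Z₃, p, r, hp, hr, hpr⟩ := P.factorization (hD.desc (r₁ ≫ g) v hw) (hTc.of_cof hn)
  refine ⟨Z₃, k ≫ n ≫ p, l ≫ n ≫ p, m ≫ p, r, P.cof_comp _ _ hk (P.cof_comp _ _ hn hp),
    P.cof_comp _ _ hl (P.cof_comp _ _ hn hp), hr, ?_, ?_, ?_, ?_, ?_⟩
  · simp [hpr, hkv]
  · simp [hpr, hlv]
  · rw [Category.assoc, reassoc_of% hD.w, reassoc_of% hit]
  · rw [Category.assoc, reassoc_of% hD.w, reassoc_of% hjt]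
  · simp [hpr]

/-- A mapping cylinder of a map `u₁` can be extended along a commutative square with horizontal
cofibrations to a mapping cylinder of `u₂` with cofibrant relative latching maps. -/
lemma exists_reedy_cylinder_extension (P : PrecofCat C) {A₁ A₂ B₁ B₂ Z₁ : C}
    {f : A₁ ⟶ A₂} {g : B₁ ⟶ B₂} {u₁ : A₁ ⟶ B₁} {u₂ : A₂ ⟶ B₂}
    {a₁ : A₁ ⟶ Z₁} {b₁ : B₁ ⟶ Z₁} {r₁ : Z₁ ⟶ B₁}
    (hA₁ : P.Cofibrant A₁) (hB₁ : P.Cofibrant B₁) (hZ₁ : P.Cofibrant Z₁)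
    (hf : P.Cof f) (hg : P.Cof g)
    (ha : a₁ ≫ r₁ = u₁) (hb : b₁ ≫ r₁ = 𝟙 B₁) (sq : u₁ ≫ g = f ≫ u₂) :
    ∃ (Q Q' Z₂ : C) (i : A₂ ⟶ Q) (j : Z₁ ⟶ Q) (i' : B₂ ⟶ Q') (j' : Z₁ ⟶ Q')
      (q : Q ⟶ Z₂) (q' : Q' ⟶ Z₂) (r : Z₂ ⟶ B₂),
      IsPushout f a₁ i j ∧ IsPushout g b₁ i' j' ∧ P.Cof j ∧ P.Cof q ∧ P.Cof q' ∧ P.W r ∧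
      j ≫ q = j' ≫ q' ∧ i ≫ q ≫ r = u₂ ∧ i' ≫ q' ≫ r = 𝟙 B₂ ∧ (j ≫ q) ≫ r = r₁ ≫ g := by
  obtain ⟨Q, i, j, hQ⟩ := P.pushout_exists f a₁ hf hA₁ hZ₁
  obtain ⟨Q', i', j', hQ'⟩ := P.pushout_exists g b₁ hg hB₁ hZ₁
  have hj : P.Cof j := P.pushout_cof _ _ _ _ hf hA₁ hZ₁ hQ
  have hj' : P.Cof j' := P.pushout_cof _ _ _ _ hg hB₁ hZ₁ hQ'
  have hQc : P.Cofibrant Q := hZ₁.of_cof hj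
  have hQc' : P.Cofibrant Q' := hZ₁.of_cof hj'
  obtain ⟨D, m, n, hD⟩ := P.pushout_exists j j' hj hZ₁ hQc'
  have hn : P.Cof n := P.pushout_cof _ _ _ _ hj hZ₁ hQc' hD
  have hm : P.Cof m := P.pushout_cof _ _ _ _ hj' hZ₁ hQc hD.flip
  let v : Q ⟶ B₂ := hQ.desc u₂ (r₁ ≫ g) (by rw [reassoc_of% ha, sq])
  let v' : Q' ⟶ B₂ := hQ'.desc (𝟙 B₂) (r₁ ≫ g) (by rw [reassoc_of% hb, Category.comp_id])
  obtain ⟨Z₂, p, r, hp, hr, hpr⟩ := P.factorization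
    (hD.desc v v' (by simp [v, v'])) (hQc.of_cof hm)
  refine ⟨Q, Q', Z₂, i, j, i', j', m ≫ p, n ≫ p, r, hQ, hQ', hj, P.cof_comp _ _ hm hp,
    P.cof_comp _ _ hn hp, hr, ?_, ?_, ?_, ?_⟩
  · rw [reassoc_of% hD.w]
  · simp [hpr, v]
  · simp [hpr, v']
  · simp [hpr, v]

end PrecofCat

/-- Gluing Lemma: in a commutative cube whose top and bottom faces are pushouts of
cofibrations with appropriate cofibrant corners, if three of the vertical maps are weak
equivalences then so is the fourth. -/
theorem gluing_lemma (P : PrecofCat C)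
    {A₁ A₂ A₃ A₄ B₁ B₂ B₃ B₄ : C}
    (f₁₂ : A₁ ⟶ A₂) (f₁₃ : A₁ ⟶ A₃) (f₂₄ : A₂ ⟶ A₄) (f₃₄ : A₃ ⟶ A₄)
    (g₁₂ : B₁ ⟶ B₂) (g₁₃ : B₁ ⟶ B₃) (g₂₄ : B₂ ⟶ B₄) (g₃₄ : B₃ ⟶ B₄)
    (u₁ : A₁ ⟶ B₁) (u₂ : A₂ ⟶ B₂) (u₃ : A₃ ⟶ B₃) (u₄ : A₄ ⟶ B₄)
    (htop : IsPushout f₁₂ f₁₃ f₂₄ f₃₄) (hbot : IsPushout g₁₂ g₁₃ g₂₄ g₃₄)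
    (hf₁₂ : P.Cof f₁₂) (hg₁₂ : P.Cof g₁₂)
    (hA₁ : P.Cofibrant A₁) (hA₃ : P.Cofibrant A₃)
    (hB₁ : P.Cofibrant B₁) (hB₃ : P.Cofibrant B₃)
    (sq₂ : u₁ ≫ g₁₂ = f₁₂ ≫ u₂) (sq₃ : u₁ ≫ g₁₃ = f₁₃ ≫ u₃)
    (sq₂₄ : u₂ ≫ g₂₄ = f₂₄ ≫ u₄) (sq₃₄ : u₃ ≫ g₃₄ = f₃₄ ≫ u₄)
    (hw₁ : P.W u₁) (hw₂ : P.W u₂) (hw₃ : P.W u₃) :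
    P.W u₄ := by
  have hid : ∀ X : C, P.W (𝟙 X) := fun X => P.iso_W _ inferInstance
  obtain ⟨S, i, j, hS, hi, hj⟩ := P.exists_coproduct hA₁ hB₁
  have hSc : P.Cofibrant S := hA₁.of_cof hi
  obtain ⟨Z₁, c, r₁, hc, hr₁, hcr⟩ :=
    P.factorization (hS.desc u₁ (𝟙 B₁) (Subsingleton.elim _ _)) hSc
  have hZ₁ : P.Cofibrant Z₁ := hSc.of_cof hc
  have hicr : i ≫ c ≫ r₁ = u₁ := by simp [hcr]
  have hjcr : j ≫ c ≫ r₁ = 𝟙 B₁ := by simp [hcr]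
  have ha₁W : P.W (i ≫ c) := P.W_cancel_right _ r₁ hr₁ (by rwa [Category.assoc, hicr])
  have hb₁W : P.W (j ≫ c) :=
    P.W_cancel_right _ r₁ hr₁ (by rw [Category.assoc, hjcr]; exact hid _)
  obtain ⟨Z₃, a₃, b₃, z₁₃, r₃, ha₃, hb₃, hr₃, har₃, hbr₃, haz₃, hbz₃, hzr₃⟩ :=
    P.exists_cylinder_extension hS hSc hc hA₃ hB₃ hicr hjcr sq₃
  have ha₃W : P.W a₃ := P.W_cancel_right _ r₃ hr₃ (by rwa [har₃])
  have hb₃W : P.W b₃ := P.W_cancel_right _ r₃ hr₃ (by rw [hbr₃]; exact hid _)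
  obtain ⟨Q, Q', Z₂, k, l, k', l', q, q', r₂, hQ, hQ', hl, hq, hq', hr₂, hlq, hkr, hkr', hzr₂⟩ :=
    P.exists_reedy_cylinder_extension hA₁ hB₁ hZ₁ hf₁₂ hg₁₂
      ((Category.assoc _ _ _).trans hicr) ((Category.assoc _ _ _).trans hjcr) sq₂
  have hA₂ : P.Cofibrant A₂ := hA₁.of_cof hf₁₂
  have hB₂ : P.Cofibrant B₂ := hB₁.of_cof hg₁₂
  have hkW : P.W k :=
    P.pushout_triv_cof _ _ _ _ (P.cof_comp _ _ hi hc) ha₁W hA₁ hA₂ hQ.flip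
  have hkW' : P.W k' :=
    P.pushout_triv_cof _ _ _ _ (P.cof_comp _ _ hj hc) hb₁W hB₁ hB₂ hQ'.flip
  have hqW : P.W q :=
    P.W_cancel_right _ r₂ hr₂ (P.W_cancel_left k _ hkW (by rwa [hkr]))
  have hqW' : P.W q' :=
    P.W_cancel_right _ r₂ hr₂ (P.W_cancel_left k' _ hkW' (by rw [hkr']; exact hid _))
  obtain ⟨Z₄, z₂₄, z₃₄, hZ₄⟩ := P.pushout_exists (l ≫ q) z₁₃ (P.cof_comp _ _ hl hq) hZ₁
    (hA₃.of_cof ha₃)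
  let a₄ : A₄ ⟶ Z₄ := htop.desc (k ≫ q ≫ z₂₄) (a₃ ≫ z₃₄) (by
    have h := hZ₄.w
    rw [Category.assoc] at h
    rw [reassoc_of% hQ.w, h, ← reassoc_of% haz₃])
  let b₄ : B₄ ⟶ Z₄ := hbot.desc (k' ≫ q' ≫ z₂₄) (b₃ ≫ z₃₄) (by
    have h := hZ₄.w
    rw [hlq, Category.assoc] at h
    rw [reassoc_of% hQ'.w, h, ← reassoc_of% hbz₃])
  let r₄ : Z₄ ⟶ B₄ := hZ₄.desc (r₂ ≫ g₂₄) (r₃ ≫ g₃₄) (by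
    rw [Category.assoc, reassoc_of% hzr₂, reassoc_of% hzr₃, hbot.w])
  have ha₄W : P.W a₄ := P.W_of_isPushout_of_trivial_cof htop hZ₄ hQ rfl rfl hA₁ hA₃ hZ₁ hf₁₂
    hq hqW ha₃ ha₃W haz₃ (by simp [a₄]) (by simp [a₄])
  have hb₄W : P.W b₄ := P.W_of_isPushout_of_trivial_cof hbot hZ₄ hQ' rfl hlq.symm hB₁ hB₃ hZ₁
    hg₁₂ hq' hqW' hb₃ hb₃W hbz₃ (by simp [b₄]) (by simp [b₄])
  have hbr₄ : b₄ ≫ r₄ = 𝟙 B₄ := by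
    apply hbot.hom_ext
    · simp [b₄, r₄, reassoc_of% hkr']
    · simp [b₄, r₄, reassoc_of% hbr₃]
  have har₄ : a₄ ≫ r₄ = u₄ := by
    apply htop.hom_ext
    · simp [a₄, r₄, reassoc_of% hkr, sq₂₄]
    · simp [a₄, r₄, reassoc_of% har₃, sq₃₄]
  rw [← har₄]
  exact P.W_comp _ _ ha₄W (P.W_cancel_left b₄ _ hb₄W (by rw [hbr₄]; exact hid _))
end

section
/- Excision Lemma: in a precofibration category, given a cofibration i : A → B with A cofibrant and a weak equivalence f : A → C with C cofibrant, the pushout of f along i exists and the induced map B → B ⊔_A C is again a weak equivalence. -/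
open CategoryTheory CategoryTheory.Limits

universe w v u

variable (C : Type u) [Category.{v} C] [HasInitial C]

variable {C}

namespace PrecofCat

variable (P : PrecofCat C)

lemma Cofibrant.of_cof_s3 {P : PrecofCat C} {A B : C} (hA : P.Cofibrant A) (i : A ⟶ B)
    (hi : P.Cof i) : P.Cofibrant B := by
  have h := P.cof_comp _ _ hA hi
  rwa [initial.to_comp] at h

lemma W_id (A : C) : P.W (𝟙 A) := P.iso_W _ inferInstance

/-- Cobase change along a map of cofibrant objects preserves trivial cofibrations between
cofibrations under the domain. -/
lemma W_cobaseChange_of_cof {A B B' X D D' : C} {i : A ⟶ B} {i' : A ⟶ B'} {f : A ⟶ X}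
    {g : B ⟶ D} {j : X ⟶ D} {g' : B' ⟶ D'} {j' : X ⟶ D'} {h : B' ⟶ B} {k : D' ⟶ D}
    (hA : P.Cofibrant A) (hX : P.Cofibrant X) (hi' : P.Cof i')
    (hD : IsPushout i f g j) (hD' : IsPushout i' f g' j') (hh : P.Cof h) (hhW : P.W h)
    (wi : i' ≫ h = i) (wg : g' ≫ k = h ≫ g) (wj : j' ≫ k = j) : P.W k := by
  subst wi wj
  have hk : IsPushout h g' g k := hD.of_left wg.symm hD'
  exact P.pushout_triv_cof h g' g k hh hhW (hA.of_cof_s3 _ hi')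
    (hX.of_cof_s3 _ (P.pushout_cof i' f g' j' hi' hA hX hD')) hk

/-- Cobase change along a map of cofibrant objects preserves weak equivalences between
cofibrations under the domain. -/
lemma W_cobaseChange {A B B' X D D' : C} {i : A ⟶ B} {i' : A ⟶ B'} {f : A ⟶ X}
    {g : B ⟶ D} {j : X ⟶ D} {g' : B' ⟶ D'} {j' : X ⟶ D'} {h : B' ⟶ B} {k : D' ⟶ D}
    (hA : P.Cofibrant A) (hX : P.Cofibrant X) (hi : P.Cof i) (hi' : P.Cof i')
    (hD : IsPushout i f g j) (hD' : IsPushout i' f g' j') (hhW : P.W h)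
    (wi : i' ≫ h = i) (wg : g' ≫ k = h ≫ g) (wj : j' ≫ k = j) : P.W k := by
  have hB' := hA.of_cof_s3 _ hi'
  have hB := hA.of_cof_s3 _ hi
  obtain ⟨Q, u, v, hQ⟩ := P.pushout_exists i' i hi' hA hB
  have hv : P.Cof v := P.pushout_cof _ _ _ _ hi' hA hB hQ
  have hu : P.Cof u := P.pushout_cof _ _ _ _ hi hA hB' hQ.flip
  obtain ⟨Z, c, t, hc, ht, hct⟩ :=
    P.factorization (hQ.desc h (𝟙 B) (by simpa using wi)) (hB.of_cof_s3 _ hv)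
  have huc : (u ≫ c) ≫ t = h := by simp [hct]
  have hvc : (v ≫ c) ≫ t = 𝟙 B := by simp [hct]
  have hucC := P.cof_comp _ _ hu hc
  have hvcC := P.cof_comp _ _ hv hc
  have hucW : P.W (u ≫ c) := P.W_cancel_right _ t ht (huc ▸ hhW)
  have hvcW : P.W (v ≫ c) := P.W_cancel_right _ t ht (hvc ▸ P.W_id B)
  have e : i' ≫ u ≫ c = i ≫ v ≫ c := by simp only [← Category.assoc, hQ.w]
  have et : (i ≫ v ≫ c) ≫ t = i := by rw [Category.assoc, hvc, Category.comp_id]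
  obtain ⟨E, p, q, hE⟩ :=
    P.pushout_exists (i ≫ v ≫ c) f (P.cof_comp _ _ hi hvcC) hA hX
  let k₁ : D' ⟶ E := hD'.desc ((u ≫ c) ≫ p) q (by rw [← Category.assoc, e, hE.w])
  let k₂ : D ⟶ E := hD.desc ((v ≫ c) ≫ p) q (by rw [← Category.assoc, hE.w])
  let k₃ : E ⟶ D := hE.desc (t ≫ g) j (by rw [← Category.assoc, et, hD.w])
  have hk₁ : P.W k₁ := P.W_cobaseChange_of_cof hA hX hi' hE hD' hucC hucW e
    (hD'.inl_desc _ _ _) (hD'.inr_desc _ _ _)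
  have hk₂ : P.W k₂ := P.W_cobaseChange_of_cof hA hX hi hE hD hvcC hvcW rfl
    (hD.inl_desc _ _ _) (hD.inr_desc _ _ _)
  have h₂₃ : k₂ ≫ k₃ = 𝟙 D := by
    apply hD.hom_ext
    · rw [hD.inl_desc_assoc, Category.assoc, hE.inl_desc, ← Category.assoc, hvc,
        Category.id_comp, Category.comp_id]
    · rw [hD.inr_desc_assoc, hE.inr_desc, Category.comp_id]
  have h₁₃ : k₁ ≫ k₃ = k := by
    apply hD'.hom_ext
    · rw [hD'.inl_desc_assoc, Category.assoc, hE.inl_desc, ← Category.assoc, huc, wg]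
    · rw [hD'.inr_desc_assoc, hE.inr_desc, wj]
  have hk₃ : P.W k₃ := P.W_cancel_left k₂ k₃ hk₂ (h₂₃ ▸ P.W_id D)
  exact h₁₃ ▸ P.W_comp _ _ hk₁ hk₃

/-- Excision for a retraction of a trivial cofibration. -/
lemma W_pushout_of_retraction {Z B X D : C} {i : Z ⟶ B} {r : Z ⟶ X} {s : X ⟶ Z}
    {g : B ⟶ D} {j : X ⟶ D} (hi : P.Cof i) (hX : P.Cofibrant X) (hs : P.Cof s)
    (hsW : P.W s) (hsr : s ≫ r = 𝟙 X) (hD : IsPushout i r g j) : P.W g := by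
  have hZ := hX.of_cof_s3 _ hs
  have hB := hZ.of_cof_s3 _ hi
  have hsi := P.cof_comp _ _ hs hi
  obtain ⟨B', b, a, hB'⟩ := P.pushout_exists (s ≫ i) s hsi hX hZ
  have ha : P.Cof a := P.pushout_cof _ _ _ _ hsi hX hZ hB'
  have hb : P.W b := P.pushout_triv_cof _ _ _ _ hs hsW hX hB hB'.flip
  let h : B' ⟶ B := hB'.desc (𝟙 B) i (by simp)
  let p : B' ⟶ B := hB'.desc (𝟙 B) (r ≫ s ≫ i) (by simp [reassoc_of% hsr])
  have hbh : b ≫ h = 𝟙 B := hB'.inl_desc _ _ _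
  have hah : a ≫ h = i := hB'.inr_desc _ _ _
  have hbp : b ≫ p = 𝟙 B := hB'.inl_desc _ _ _
  have hap : a ≫ p = r ≫ s ≫ i := hB'.inr_desc _ _ _
  have hhW : P.W h := P.W_cancel_left b h hb (hbh ▸ P.W_id B)
  have hp : IsPushout a r p (s ≫ i) := by
    refine (IsPushout.of_left ?_ hap.symm hB'.flip).flip
    rw [hsr, hbp]
    exact IsPushout.of_id_fst
  refine P.W_cobaseChange hZ hX hi ha hD hp hhW hah ?_ ?_
  · apply hB'.hom_ext
    · rw [reassoc_of% hbp, reassoc_of% hbh]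
    · rw [reassoc_of% hap, reassoc_of% hah, hD.w, reassoc_of% hsr]
  · rw [Category.assoc, hD.w, reassoc_of% hsr]

/-- A weak equivalence of cofibrant objects factors as a trivial cofibration followed by a
retraction of a trivial cofibration. -/
lemma exists_brown_factorization {A X : C} (f : A ⟶ X) (hA : P.Cofibrant A)
    (hX : P.Cofibrant X) (hf : P.W f) :
    ∃ (Z : C) (f' : A ⟶ Z) (r : Z ⟶ X) (s : X ⟶ Z), f' ≫ r = f ∧ s ≫ r = 𝟙 X ∧
      P.Cof f' ∧ P.W f' ∧ P.Cof s ∧ P.W s := by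
  have h₀ := P.initial_cofibrant
  obtain ⟨Q, u, v, hQ⟩ := P.pushout_exists (initial.to A) (initial.to X) hA h₀ hX
  have hv : P.Cof v := P.pushout_cof _ _ _ _ hA h₀ hX hQ
  have hu : P.Cof u := P.pushout_cof _ _ _ _ hX h₀ hA hQ.flip
  obtain ⟨Z, c, r, hc, hr, hcr⟩ :=
    P.factorization (hQ.desc f (𝟙 X) (by simp)) (hX.of_cof_s3 _ hv)
  have huc : (u ≫ c) ≫ r = f := by simp [hcr]
  have hvc : (v ≫ c) ≫ r = 𝟙 X := by simp [hcr]
  exact ⟨Z, u ≫ c, r, v ≫ c, huc, hvc, P.cof_comp _ _ hu hc,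
    P.W_cancel_right _ r hr (huc ▸ hf), P.cof_comp _ _ hv hc,
    P.W_cancel_right _ r hr (hvc ▸ P.W_id X)⟩

end PrecofCat

/-- Excision Lemma: the pushout of a weak equivalence between cofibrant objects along
a cofibration with cofibrant domain exists and is again a weak equivalence. -/
theorem excision (P : PrecofCat C) {A B X : C} (i : A ⟶ B) (f : A ⟶ X)
    (hi : P.Cof i) (hA : P.Cofibrant A) (hX : P.Cofibrant X) (hf : P.W f) :
    ∃ (D : C) (g : B ⟶ D) (j : X ⟶ D), IsPushout i f g j ∧
      ∀ {D' : C} (g' : B ⟶ D') (j' : X ⟶ D'), IsPushout i f g' j' → P.W g' := by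
  obtain ⟨D, g, j, hD⟩ := P.pushout_exists i f hi hA hX
  refine ⟨D, g, j, hD, ?_⟩
  intro D' g' j' hD'
  obtain ⟨Z, f', r, s, rfl, hsr, hf'C, hf'W, hsC, hsW⟩ :=
    P.exists_brown_factorization f hA hX hf
  have hZ := hA.of_cof_s3 _ hf'C
  have hB := hA.of_cof_s3 _ hi
  obtain ⟨B₁, g₁, i₁, hB₁⟩ := P.pushout_exists i f' hi hA hZ
  have hi₁ : P.Cof i₁ := P.pushout_cof _ _ _ _ hi hA hZ hB₁
  have hg₁ : P.W g₁ := P.pushout_triv_cof _ _ _ _ hf'C hf'W hA hB hB₁.flip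
  let k : B₁ ⟶ D' := hB₁.desc g' (r ≫ j') (by rw [hD'.w, Category.assoc])
  have hgk : g₁ ≫ k = g' := hB₁.inl_desc _ _ _
  have hik : i₁ ≫ k = r ≫ j' := hB₁.inr_desc _ _ _
  have hk : IsPushout i₁ r k j' :=
    (IsPushout.of_left (hgk.symm ▸ hD'.flip) hik.symm hB₁.flip).flip
  rw [← hgk]
  exact P.W_comp _ _ hg₁ (P.W_pushout_of_retraction hi₁ hX hsC hsW hsr hk)
end
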